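/- arXiv:2512.10204 — 2 statements merged into one kernel-verified Lean document; each statement's English description precedes it below -/
import Mathlib

section
/- Let Ω ⊆ ℝᵈ be open, let x ∈ Ω, and let ψ : Ω → ℝ be Lipschitz continuous on a neighborhood of x. Let D ⊆ ℝᵈ and D_ψ ⊆ ℝᵈ be Lebesgue-null sets such that ψ is (Fréchet) differentiable at every point of Ω \ D_ψ. Then, identifying the Clarke subdifferential ∂ψ(x) with a subset of ℝᵈ via gradients, ∂ψ(x) equals the convex hull of the set of all limits lim_{k→∞} ∇ψ(x_k), taken over all sequences (x_k) ⊆ Ω \ (D ∪ D_ψ) with x_k → x for which the sequence of gradients (∇ψ(x_k)) converges. -/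
open Filter Topology MeasureTheory RealInnerProductSpace

/-- The Clarke (generalized) directional derivative of `f` at `u` in direction `v`. -/
noncomputable def clarkeDeriv {X : Type*} [NormedAddCommGroup X] [NormedSpace ℝ X]
    (f : X → ℝ) (u v : X) : ℝ :=
  Filter.limsup (fun p : X × ℝ => (f (p.1 + p.2 • v) - f p.1) / p.2)
    ((𝓝 u) ×ˢ 𝓝[>] (0:ℝ))

/-!
By Rademacher's theorem and Fubini, almost every segment in a given direction meets the
exceptional null set of a Lipschitz function only in a null set of parameters. Integrating the
derivative along such segments, and passing to the remaining ones by continuity, shows that an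
almost everywhere bound `f'(y) v ≤ c` near `x` already bounds the Clarke derivative at `x` in
direction `v` by `c`. A functional outside the (compact) convex hull of the limiting derivatives is
strictly separated from it by a direction `v`; compactness turns the separation into such a bound,
so that the functional is no Clarke subgradient. Conversely, difference quotients at points of
differentiability near `x` compete in the limit superior defining the Clarke derivative, so limiting
derivatives lie in the Clarke subdifferential, which is convex.
-/

theorem convexHull_eq_iUnion_image_stdSimplex_prod_pi {𝕜 E : Type*} [Field 𝕜] [LinearOrder 𝕜]
    [IsStrictOrderedRing 𝕜] [AddCommGroup E] [Module 𝕜 E] [FiniteDimensional 𝕜 E] (s : Set E) :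
    convexHull 𝕜 s = ⋃ n ∈ Finset.range (Module.finrank 𝕜 E + 2),
      (fun p : (Fin n → 𝕜) × (Fin n → E) => ∑ i, p.1 i • p.2 i) ''
        (stdSimplex 𝕜 (Fin n) ×ˢ Set.univ.pi fun _ => s) := by
  refine Set.Subset.antisymm (fun x hx => ?_) (Set.iUnion₂_subset fun n _ => ?_)
  · obtain ⟨ι, _, z, w, hz, hind, hw, hw1, rfl⟩ := eq_pos_convex_span_of_mem_convexHull hx
    have hcard : Fintype.card ι < Module.finrank 𝕜 E + 2 :=
      Nat.lt_succ_of_le (hind.card_le_finrank_succ.trans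
        (Nat.succ_le_succ (Submodule.finrank_le (vectorSpan 𝕜 (Set.range z)))))
    let e := Fintype.equivFin ι
    refine Set.mem_iUnion₂.2 ⟨Fintype.card ι, Finset.mem_range.2 hcard, ⟨w ∘ e.symm, z ∘ e.symm⟩,
      ⟨⟨fun i => (hw _).le, ?_⟩, fun i _ => hz ⟨_, rfl⟩⟩, ?_⟩
    · exact (e.symm.sum_comp w).trans hw1
    · exact e.symm.sum_comp fun i => w i • z i
  · rintro _ ⟨⟨w, z⟩, ⟨hw, hz⟩, rfl⟩
    exact (convex_convexHull 𝕜 s).sum_mem (fun i _ => hw.1 i) hw.2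
      fun i _ => subset_convexHull 𝕜 s (hz i trivial)

theorem isCompact_convexHull_of_isCompact {E : Type*} [AddCommGroup E] [Module ℝ E]
    [FiniteDimensional ℝ E] [TopologicalSpace E] [ContinuousAdd E] [ContinuousSMul ℝ E] {s : Set E}
    (hs : IsCompact s) : IsCompact (convexHull ℝ s) := by
  rw [convexHull_eq_iUnion_image_stdSimplex_prod_pi]
  exact Finset.isCompact_biUnion _ fun n _ =>
    ((isCompact_stdSimplex ℝ (Fin n)).prod (isCompact_univ_pi fun _ => hs)).image (by fun_prop)

section Dual

variable {E : Type*} [NormedAddCommGroup E] [NormedSpace ℝ E] [FiniteDimensional ℝ E]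

theorem surjective_inclusionInDoubleDual :
    Function.Surjective (NormedSpace.inclusionInDoubleDual ℝ E) := by
  have finrank_strongDual (F : Type _) [NormedAddCommGroup F] [NormedSpace ℝ F]
      [FiniteDimensional ℝ F] : Module.finrank ℝ F = Module.finrank ℝ (StrongDual ℝ F) :=
    Subspace.dual_finrank_eq.symm.trans LinearMap.toContinuousLinearMap.finrank_eq
  exact (LinearMap.injective_iff_surjective_of_finrank_eq_finrank
    ((finrank_strongDual E).trans (finrank_strongDual (StrongDual ℝ E)))
    (f := (NormedSpace.inclusionInDoubleDual ℝ E).toLinearMap)).1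
    (NormedSpace.inclusionInDoubleDualLi ℝ (E := E)).injective

theorem exists_forall_apply_lt_of_notMem_convexHull {K : Set (StrongDual ℝ E)} (hK : IsCompact K)
    {φ : StrongDual ℝ E} (hφ : φ ∉ convexHull ℝ K) :
    ∃ (v : E) (c : ℝ), (∀ η ∈ K, η v < c) ∧ c < φ v := by
  obtain ⟨g, c, hg, hc⟩ := geometric_hahn_banach_closed_point (convex_convexHull ℝ K)
    (isCompact_convexHull_of_isCompact hK).isClosed hφ
  obtain ⟨v, rfl⟩ := surjective_inclusionInDoubleDual g
  exact ⟨v, c, fun η hη => hg η (subset_convexHull ℝ K hη), hc⟩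

end Dual

section ClusterPoints

variable {X Y : Type*} [TopologicalSpace Y]

theorem isCompact_setOf_mapClusterPt [T2Space Y] {l : Filter X} {g : X → Y} {K : Set Y}
    (hK : IsCompact K) (hg : ∀ᶠ a in l, g a ∈ K) : IsCompact {y | MapClusterPt y l g} :=
  hK.of_isClosed_subset isClosed_setOfPred_clusterPt
    fun _ hy => hK.isClosed.mem_of_mapClusterPt hy hg

theorem exists_seq_tendsto_iff_mapClusterPt [TopologicalSpace X] [FirstCountableTopology X]
    [FirstCountableTopology Y] {g : X → Y} {A : Set X} {x : X} {y : Y} :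
    (∃ u : ℕ → X, (∀ k, u k ∈ A) ∧ Tendsto u atTop (𝓝 x) ∧
      Tendsto (fun k => g (u k)) atTop (𝓝 y)) ↔ MapClusterPt y (𝓝[A] x) g := by
  constructor
  · rintro ⟨u, hA, hu, hg⟩
    exact hg.mapClusterPt.of_comp (tendsto_nhdsWithin_iff.2 ⟨hu, Eventually.of_forall hA⟩)
  · intro h
    obtain ⟨u, hg, hu⟩ := h.exists_seq_tendsto
    obtain ⟨hux, hA⟩ := tendsto_nhdsWithin_iff.1 hu
    obtain ⟨n, hn⟩ := eventually_atTop.1 hA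
    exact ⟨fun k => u (k + n), fun k => hn _ (Nat.le_add_left n k),
      hux.comp (tendsto_add_atTop_nat n), hg.comp (tendsto_add_atTop_nat n)⟩

end ClusterPoints

section MeanValue

theorem sub_le_mul_of_ae_deriv_le {g : ℝ → ℝ} {a b c : ℝ} (hab : a ≤ b)
    (hg : AbsolutelyContinuousOnInterval g a b)
    (hc : ∀ᵐ t, t ∈ Set.Icc a b → deriv g t ≤ c) : g b - g a ≤ (b - a) * c :=
  calc g b - g a = ∫ t in a..b, deriv g t := hg.integral_deriv_eq_sub.symm
    _ ≤ ∫ _ in a..b, c := intervalIntegral.integral_mono_ae_restrict hab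
      hg.intervalIntegrable_deriv intervalIntegrable_const
      ((ae_restrict_iff' measurableSet_Icc).2 hc)
    _ = (b - a) * c := by rw [intervalIntegral.integral_const, smul_eq_mul]

variable {E : Type*} [NormedAddCommGroup E] [NormedSpace ℝ E] {f : E → ℝ} {C : NNReal} {U : Set E}
  {v y : E} {c : ℝ}

theorem sub_le_of_ae_line_fderiv_le (hU : Convex ℝ U) (hf : LipschitzOnWith C f U)
    (hy : y ∈ U) (hyv : y + v ∈ U)
    (hc : ∀ᵐ t : ℝ, y + t • v ∈ U →
      DifferentiableAt ℝ f (y + t • v) ∧ fderiv ℝ f (y + t • v) v ≤ c) :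
    f (y + v) - f y ≤ c := by
  have hmaps : Set.MapsTo (fun t : ℝ => y + t • v) (Set.Icc 0 1) U :=
    fun _ ht => hU.add_smul_mem hy hyv ht
  have hline : LipschitzWith ‖v‖₊ fun t : ℝ => y + t • v :=
    LipschitzWith.of_dist_le_mul fun a b => by
      simp [dist_eq_norm, ← sub_smul, norm_smul, mul_comm]
  have hac : AbsolutelyContinuousOnInterval (fun t : ℝ => f (y + t • v)) 0 1 := by
    rw [← Set.uIcc_of_le zero_le_one] at hmaps
    exact (hf.comp hline.lipschitzOnWith hmaps).absolutelyContinuousOnInterval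
  have hderiv : ∀ᵐ t : ℝ, t ∈ Set.Icc 0 1 → deriv (fun t : ℝ => f (y + t • v)) t ≤ c := by
    filter_upwards [hc] with t ht hI
    obtain ⟨hd, hle⟩ := ht (hmaps hI)
    have hv : HasDerivAt (fun t : ℝ => y + t • v) v t := by
      simpa using ((hasDerivAt_id t).smul_const v).const_add y
    exact (hd.hasFDerivAt.comp_hasDerivAt t hv).deriv.trans_le hle
  simpa using sub_le_mul_of_ae_deriv_le zero_le_one hac hderiv

variable [FiniteDimensional ℝ E] [MeasurableSpace E] [BorelSpace E] (μ : Measure E)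
  [μ.IsAddHaarMeasure]

theorem ae_ae_add_smul {p : E → Prop} (hp : ∀ᵐ z ∂μ, p z) (v : E) :
    ∀ᵐ y ∂μ, ∀ᵐ t : ℝ, p (y + t • v) := by
  obtain ⟨s, hs, hsm, hsp⟩ := hp.exists_measurable_mem
  have hlines : ∀ᵐ y ∂μ, ∀ᵐ t : ℝ, y + LinearMap.toSpanSingleton ℝ E v t ∈ s :=
    (ae_ae_add_linearMap_mem_iff _ volume μ hsm).2 hs
  exact hlines.mono fun y hy => hy.mono fun t ht => hsp _ ht

theorem sub_le_of_ae_fderiv_le (hUc : Convex ℝ U) (hUo : IsOpen U) (hf : LipschitzOnWith C f U)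
    (hc : ∀ᵐ z ∂μ, z ∈ U → fderiv ℝ f z v ≤ c) (hy : y ∈ U) (hyv : y + v ∈ U) :
    f (y + v) - f y ≤ c := by
  have hrademacher : ∀ᵐ z ∂μ, z ∈ U → DifferentiableAt ℝ f z := by
    filter_upwards [hf.ae_differentiableWithinAt_of_mem (μ := μ)] with z hz hzU
    exact (hz hzU).differentiableAt (hUo.mem_nhds hzU)
  have hlines : ∀ᵐ z ∂μ, z ∈ U → z + v ∈ U → f (z + v) - f z ≤ c := by
    filter_upwards [ae_ae_add_smul μ (hrademacher.and hc) v] with z hz hzU hzv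
    exact sub_le_of_ae_line_fderiv_le hUc hf hzU hzv
      (hz.mono fun t ht hU => ⟨ht.1 hU, ht.2 hU⟩)
  have hshift : Tendsto (fun z => z + v) (𝓝 y) (𝓝 (y + v)) := tendsto_id.add_const v
  have hlim : Tendsto (fun z => f (z + v) - f z) (𝓝 y) (𝓝 (f (y + v) - f y)) :=
    ((hf.continuousOn.continuousAt (hUo.mem_nhds hyv)).tendsto.comp hshift).sub
      (hf.continuousOn.continuousAt (hUo.mem_nhds hy))
  have hfreq : ∃ᶠ z in 𝓝 y, z ∈ U → z + v ∈ U → f (z + v) - f z ≤ c :=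
    mem_closure_iff_frequently.1 (Measure.dense_of_ae hlines y)
  refine le_of_tendsto_of_frequently hlim ((hfreq.and_eventually
    ((hUo.eventually_mem hy).and (hshift.eventually (hUo.eventually_mem hyv)))).mono ?_)
  exact fun z hz => hz.1 hz.2.1 hz.2.2

end MeanValue

section ClarkeDeriv

variable {E : Type*} [NormedAddCommGroup E] [NormedSpace ℝ E] {f : E → ℝ} {C : NNReal}
  {s : Set E} {x v : E} {c : ℝ}

theorem eventually_add_smul_mem (hs : s ∈ 𝓝 x) (v : E) :
    ∀ᶠ p : E × ℝ in 𝓝 x ×ˢ 𝓝[>] 0, p.1 + p.2 • v ∈ s := by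
  have hcont : Tendsto (fun p : E × ℝ => p.1 + p.2 • v) (𝓝 x ×ˢ 𝓝 0) (𝓝 x) := by
    rw [← nhds_prod_eq]
    exact Continuous.tendsto' (by fun_prop) _ _ (by simp)
  exact (hcont.mono_left (prod_mono le_rfl nhdsWithin_le_nhds)).eventually hs

-- Without boundedness, the real-valued `limsup` in `clarkeDeriv` would be a junk value.
theorem isBoundedUnder_abs_sub_div_of_lipschitzOnWith (hs : s ∈ 𝓝 x)
    (hf : LipschitzOnWith C f s) (v : E) :
    IsBoundedUnder (· ≤ ·) (𝓝 x ×ˢ 𝓝[>] (0 : ℝ))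
      fun p => |(f (p.1 + p.2 • v) - f p.1) / p.2| := by
  refine isBoundedUnder_of_eventually_le (a := C * ‖v‖) ?_
  filter_upwards [tendsto_fst.eventually hs, eventually_add_smul_mem hs v,
    tendsto_snd.eventually self_mem_nhdsWithin] with p hp hpv (hpos : 0 < p.2)
  rw [abs_div, abs_of_pos hpos, div_le_iff₀ hpos]
  calc |f (p.1 + p.2 • v) - f p.1| ≤ C * ‖p.1 + p.2 • v - p.1‖ := hf.norm_sub_le hpv hp
    _ = C * ‖v‖ * p.2 := by
      rw [add_sub_cancel_left, norm_smul, Real.norm_of_nonneg hpos.le]; ring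

theorem clarkeDeriv_le_of_eventually_sub_le (hs : s ∈ 𝓝 x) (hf : LipschitzOnWith C f s)
    (h : ∀ᶠ p : E × ℝ in 𝓝 x ×ˢ 𝓝[>] 0, f (p.1 + p.2 • v) - f p.1 ≤ c * p.2) :
    clarkeDeriv f x v ≤ c := by
  have hbdd := (isBoundedUnder_le_abs.1 (isBoundedUnder_abs_sub_div_of_lipschitzOnWith hs hf v)).2
  refine limsup_le_of_le hbdd.isCoboundedUnder_le ?_
  filter_upwards [h, tendsto_snd.eventually self_mem_nhdsWithin] with p hp (hpos : 0 < p.2)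
  exact (div_le_iff₀ hpos).2 hp

theorem le_clarkeDeriv_of_frequently_lt_fderiv (hs : s ∈ 𝓝 x) (hf : LipschitzOnWith C f s)
    (h : ∃ᶠ y in 𝓝 x, DifferentiableAt ℝ f y ∧ c < fderiv ℝ f y v) : c ≤ clarkeDeriv f x v := by
  have hslope (y : E) (hy : DifferentiableAt ℝ f y ∧ c < fderiv ℝ f y v) :
      ∃ᶠ t in 𝓝[>] (0 : ℝ), c ≤ (f (y + t • v) - f y) / t := by
    have hlim := (hy.1.hasFDerivAt.hasLineDerivAt v).tendsto_slope_zero_right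
    refine ((hlim.eventually (lt_mem_nhds hy.2)).mono fun t ht => ?_).frequently
    exact (ht.trans_eq (div_eq_inv_mul _ _).symm).le
  exact le_limsup_of_frequently_le
    ((frequently_curry_iff _).2 (h.mono hslope) |>.filter_mono curry_le_prod)
    (isBoundedUnder_le_abs.1 (isBoundedUnder_abs_sub_div_of_lipschitzOnWith hs hf v)).1

theorem clarkeDeriv_le_of_eventually_fderiv_le [FiniteDimensional ℝ E] [MeasurableSpace E]
    [BorelSpace E] (μ : Measure E) [μ.IsAddHaarMeasure] (hs : s ∈ 𝓝 x)
    (hf : LipschitzOnWith C f s) (hc : ∀ᶠ y in 𝓝 x ⊓ ae μ, fderiv ℝ f y v ≤ c) :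
    clarkeDeriv f x v ≤ c := by
  obtain ⟨V, hV, N, hN, hVN⟩ := eventually_inf.1 hc
  obtain ⟨r, hr, hball⟩ := Metric.mem_nhds_iff.1 (inter_mem hs hV)
  have hU := Metric.ball_mem_nhds x hr
  refine clarkeDeriv_le_of_eventually_sub_le hs hf ?_
  filter_upwards [tendsto_fst.eventually hU, eventually_add_smul_mem hU v,
    tendsto_snd.eventually self_mem_nhdsWithin] with p hp hpv (hpos : 0 < p.2)
  refine sub_le_of_ae_fderiv_le μ (convex_ball x r) Metric.isOpen_ball
    (hf.mono fun y hy => (hball hy).1) ?_ hp hpv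
  filter_upwards [hN] with z hzN hz
  rw [map_smul, smul_eq_mul, mul_comm]
  exact mul_le_mul_of_nonneg_right (hVN z ⟨(hball hz).2, hzN⟩) hpos.le

end ClarkeDeriv

section ClarkeSubdifferential

variable {E : Type*} [NormedAddCommGroup E] [NormedSpace ℝ E]

/-- The Clarke subdifferential of `f` at `x`, as a set of continuous linear functionals, so that no
inner product is needed. -/
def clarkeSubdifferential (f : E → ℝ) (x : E) : Set (StrongDual ℝ E) :=
  {φ | ∀ v, φ v ≤ clarkeDeriv f x v}

/-- The limits of the derivatives of `f` along sequences in `A` converging to `x`. Clarke's theorem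
describes `clarkeSubdifferential f x` through this set, with `A` avoiding a null set. -/
def limitingDerivatives (f : E → ℝ) (A : Set E) (x : E) : Set (StrongDual ℝ E) :=
  {φ | ∃ u : ℕ → E, (∀ k, u k ∈ A) ∧ Tendsto u atTop (𝓝 x) ∧
    Tendsto (fun k => fderiv ℝ f (u k)) atTop (𝓝 φ)}

variable {f : E → ℝ} {C : NNReal} {s A : Set E} {x : E}

theorem convex_clarkeSubdifferential : Convex ℝ (clarkeSubdifferential f x) :=
  fun _ hφ _ hη _ _ ha hb hab v => convex_Iic (clarkeDeriv f x v) (hφ v) (hη v) ha hb hab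

theorem limitingDerivatives_eq_setOf_mapClusterPt :
    limitingDerivatives f A x = {φ | MapClusterPt φ (𝓝[A] x) (fderiv ℝ f)} :=
  Set.ext fun _ => exists_seq_tendsto_iff_mapClusterPt

theorem limitingDerivatives_subset_clarkeSubdifferential (hs : s ∈ 𝓝 x)
    (hf : LipschitzOnWith C f s) (hA : ∀ y ∈ A, DifferentiableAt ℝ f y) :
    limitingDerivatives f A x ⊆ clarkeSubdifferential f x := by
  rw [limitingDerivatives_eq_setOf_mapClusterPt]
  intro φ hφ v
  refine le_of_forall_lt_imp_le_of_dense fun c hc => ?_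
  have hnear : ∀ᶠ η : StrongDual ℝ E in 𝓝 φ, c < η v :=
    (by fun_prop : ContinuousAt (fun η : StrongDual ℝ E => η v) φ).eventually (lt_mem_nhds hc)
  have hfreq : ∃ᶠ y in 𝓝[A] x, y ∈ A ∧ c < fderiv ℝ f y v :=
    ((MapClusterPt.frequently hφ hnear).and_eventually eventually_mem_nhdsWithin).mono
      fun _ => And.symm
  exact le_clarkeDeriv_of_frequently_lt_fderiv hs hf
    ((hfreq.filter_mono nhdsWithin_le_nhds).mono fun y => And.imp_left (hA y))

theorem eventually_fderiv_mem_closedBall (hs : s ∈ 𝓝 x) (hf : LipschitzOnWith C f s) :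
    ∀ᶠ y in 𝓝 x, fderiv ℝ f y ∈ Metric.closedBall 0 (C : ℝ) :=
  (eventually_eventually_nhds.2 hs).mono fun _ hy =>
    mem_closedBall_zero_iff.2 (norm_fderiv_le_of_lipschitzOn ℝ hy hf)

variable [FiniteDimensional ℝ E]

theorem isCompact_limitingDerivatives (hs : s ∈ 𝓝 x) (hf : LipschitzOnWith C f s) :
    IsCompact (limitingDerivatives f A x) := by
  rw [limitingDerivatives_eq_setOf_mapClusterPt]
  exact isCompact_setOf_mapClusterPt (isCompact_closedBall 0 (C : ℝ))
    ((eventually_fderiv_mem_closedBall hs hf).filter_mono nhdsWithin_le_nhds)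

theorem eventually_fderiv_lt_of_forall_limitingDerivatives (hs : s ∈ 𝓝 x)
    (hf : LipschitzOnWith C f s) {v : E} {c : ℝ} (hc : ∀ φ ∈ limitingDerivatives f A x, φ v < c) :
    ∀ᶠ y in 𝓝[A] x, fderiv ℝ f y v < c := by
  rw [limitingDerivatives_eq_setOf_mapClusterPt] at hc
  have hopen : IsOpen {φ : StrongDual ℝ E | φ v < c} :=
    isOpen_lt (by fun_prop) continuous_const
  exact ((isCompact_closedBall 0 (C : ℝ)).tendsto_nhdsSet_of_mapClusterPt
    ((eventually_fderiv_mem_closedBall hs hf).filter_mono nhdsWithin_le_nhds)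
    fun φ _ hφ => hc φ hφ).eventually hopen.mem_nhdsSet_self

theorem clarkeSubdifferential_subset_convexHull_limitingDerivatives [MeasurableSpace E]
    [BorelSpace E] (μ : Measure E) [μ.IsAddHaarMeasure] (hs : s ∈ 𝓝 x)
    (hf : LipschitzOnWith C f s) (hA : A ∈ 𝓝 x ⊓ ae μ) :
    clarkeSubdifferential f x ⊆ convexHull ℝ (limitingDerivatives f A x) := by
  intro φ hφ
  by_contra hnot
  obtain ⟨v, c, hlt, hcφ⟩ :=
    exists_forall_apply_lt_of_notMem_convexHull (isCompact_limitingDerivatives hs hf) hnot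
  have hle : 𝓝 x ⊓ ae μ ≤ 𝓝[A] x := le_inf inf_le_left (le_principal_iff.2 hA)
  have hev : ∀ᶠ y in 𝓝 x ⊓ ae μ, fderiv ℝ f y v ≤ c :=
    ((eventually_fderiv_lt_of_forall_limitingDerivatives hs hf hlt).filter_mono hle).mono
      fun _ => le_of_lt
  exact (hcφ.trans_le (hφ v)).not_ge (clarkeDeriv_le_of_eventually_fderiv_le μ hs hf hev)

end ClarkeSubdifferential

theorem preimage_toDual_convexHull_limitingDerivatives {E : Type*} [NormedAddCommGroup E]
    [InnerProductSpace ℝ E] [CompleteSpace E] (f : E → ℝ) (A : Set E) (x : E) :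
    InnerProductSpace.toDual ℝ E ⁻¹' convexHull ℝ (limitingDerivatives f A x) =
      convexHull ℝ {ξ : E | ∃ u : ℕ → E, (∀ k, u k ∈ A) ∧ Tendsto u atTop (𝓝 x) ∧
        Tendsto (fun k => gradient f (u k)) atTop (𝓝 ξ)} := by
  let R := InnerProductSpace.toDual ℝ E
  have hlin : IsLinearMap ℝ R.symm := ⟨map_add R.symm, fun c φ => by simp⟩
  have himage (S : Set (StrongDual ℝ E)) : R ⁻¹' S = R.symm '' S :=
    (Equiv.image_symm_eq_preimage R.toEquiv S).symm
  rw [himage, hlin.image_convexHull, ← himage]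
  congr 1
  ext ξ
  refine exists_congr fun u => and_congr_right' (and_congr_right' ?_)
  simp only [R.isometry.isEmbedding.tendsto_nhds_iff (f := fun k => gradient f (u k)), R,
    Function.comp_def, toDual_gradient]

-- `A ∈ 𝓝 x ⊓ ae μ` says that `A` contains almost every point of some neighborhood of `x`.
theorem stmt6_general {E : Type*} [NormedAddCommGroup E] [NormedSpace ℝ E]
    [FiniteDimensional ℝ E] [MeasurableSpace E] [BorelSpace E] (μ : Measure E)
    [μ.IsAddHaarMeasure] {f : E → ℝ} {A : Set E} {x : E}
    (hf : ∃ (C : NNReal) (s : Set E), s ∈ 𝓝 x ∧ LipschitzOnWith C f s)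
    (hA : A ∈ 𝓝 x ⊓ ae μ) (hdiff : ∀ y ∈ A, DifferentiableAt ℝ f y) :
    clarkeSubdifferential f x = convexHull ℝ (limitingDerivatives f A x) := by
  obtain ⟨C, s, hs, hLip⟩ := hf
  exact Set.Subset.antisymm
    (clarkeSubdifferential_subset_convexHull_limitingDerivatives μ hs hLip hA)
    (convexHull_min (limitingDerivatives_subset_clarkeSubdifferential hs hLip hdiff)
      convex_clarkeSubdifferential)

theorem stmt6 {d : ℕ} (Ω : Set (EuclideanSpace ℝ (Fin d))) (hΩ : IsOpen Ω)
    (x : EuclideanSpace ℝ (Fin d)) (hx : x ∈ Ω)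
    (ψ : EuclideanSpace ℝ (Fin d) → ℝ)
    (hψ : ∃ (L : NNReal) (s : Set (EuclideanSpace ℝ (Fin d))), s ∈ 𝓝 x ∧ LipschitzOnWith L ψ s)
    (D Dψ : Set (EuclideanSpace ℝ (Fin d)))
    (hD : volume D = 0) (hDψ : volume Dψ = 0)
    (hdiff : ∀ y ∈ Ω \ Dψ, DifferentiableAt ℝ ψ y) :
    {ξ : EuclideanSpace ℝ (Fin d) | ∀ w, ⟪ξ, w⟫ ≤ clarkeDeriv ψ x w}
      = convexHull ℝ {ξ : EuclideanSpace ℝ (Fin d) |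
          ∃ xk : ℕ → EuclideanSpace ℝ (Fin d),
            (∀ k, xk k ∈ Ω \ (D ∪ Dψ)) ∧ Tendsto xk atTop (𝓝 x) ∧
            Tendsto (fun k => gradient ψ (xk k)) atTop (𝓝 ξ)} := by
  have hA : Ω \ (D ∪ Dψ) ∈ 𝓝 x ⊓ ae volume :=
    inter_mem_inf (hΩ.mem_nhds hx) (compl_mem_ae_iff.2 (measure_union_null hD hDψ))
  have hclarke := stmt6_general volume hψ hA fun y hy => hdiff y ⟨hy.1, fun h => hy.2 (.inr h)⟩
  exact (congrArg (InnerProductSpace.toDual ℝ _ ⁻¹' ·) hclarke).trans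
    (preimage_toDual_convexHull_limitingDerivatives ψ _ x)
end

section
/- Assume the abstract VHI data hypotheses with α_Ψ < m_A. Then there exists θ₀ > 0 such that for every θ ∈ (0, θ₀): (i) for each w ∈ K the auxiliary inequality problem—find u ∈ K such that (u, v − u)_V + θ[Φ(v) − Φ(u) + Ψ⁰(u; v − u)] ≥ (w, v − u)_V − θ[⟨Aw, v − u⟩ − ⟨f, v − u⟩] for all v ∈ K—admits a unique solution u =: T_θ(w) ∈ K; and (ii) the map T_θ : K → K is a contraction, i.e., there is a constant k ∈ [0,1) with ‖T_θ(w₁) − T_θ(w₂)‖_V ≤ k‖w₁ − w₂‖_V for all w₁, w₂ ∈ K. -/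
open Filter Topology RealInnerProductSpace

/-! The auxiliary inequality is the optimality condition of minimizing
`Ψ + Φ + θ⁻¹ (‖·‖² / 2 - g)`, where `g = ⟪w, ·⟫ - θ (A w - f)`: relaxed monotonicity of the Clarke
derivative makes `Ψ + α / 2 ‖·‖²` convex (compare `Ψ` with a quadratic along segments), so for
`θ α < 1` the functional is strongly convex and has a minimizer. Adding the inequalities of two
solutions shows that `g ↦ u` is Lipschitz with constant `1 / (1 - θ α)`, while strong monotonicity
and Lipschitz continuity of `A` make `w ↦ g` Lipschitz with constant
`√(1 - 2 θ m + θ² L²)`. To first order in `θ` the product of the two constants is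
`1 - θ (m - α)`. -/

/-- Lipschitz continuity near the single point `u`; local Lipschitz continuity is this property at
every point. -/
def IsLipschitzNear {X : Type*} [PseudoEMetricSpace X] (Ψ : X → ℝ) (u : X) : Prop :=
  ∃ (L : NNReal) (s : Set X), s ∈ 𝓝 u ∧ LipschitzOnWith L Ψ s

theorem IsLipschitzNear.continuousAt {X : Type*} [PseudoEMetricSpace X] {Ψ : X → ℝ} {u : X}
    (hΨ : IsLipschitzNear Ψ u) : ContinuousAt Ψ u :=
  let ⟨_, _, hs, hL⟩ := hΨ
  hL.continuousOn.continuousAt hs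

/-- The relaxed monotonicity condition with constant `α` on the Clarke directional derivative,
restricted to pairs of points of `K`. -/
def ClarkeRelaxedMonotoneOn {X : Type*} [NormedAddCommGroup X] [NormedSpace ℝ X]
    (K : Set X) (Ψ : X → ℝ) (α : ℝ) : Prop :=
  ∀ v₁ ∈ K, ∀ v₂ ∈ K,
    clarkeDeriv Ψ v₁ (v₂ - v₁) + clarkeDeriv Ψ v₂ (v₁ - v₂) ≤ α * ‖v₁ - v₂‖ ^ 2

open scoped Pointwise in
theorem limsup_const_mul_of_pos {ι : Type*} (l : Filter ι) (q : ι → ℝ) {c : ℝ} (hc : 0 < c) :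
    limsup (fun i => c * q i) l = c * limsup q l := by
  have hset : {a | ∀ᶠ i in l, c * q i ≤ a} = c • {a | ∀ᶠ i in l, q i ≤ a} := by
    ext a
    simp only [Set.mem_smul_set_iff_inv_smul_mem₀ hc.ne', Set.mem_ofPred_eq, smul_eq_mul,
      le_inv_mul_iff₀ hc]
  rw [limsup_eq, limsup_eq, hset, Real.sInf_smul_of_nonneg hc.le, smul_eq_mul]

section ClarkeDerivative

variable {X : Type*} [NormedAddCommGroup X] [NormedSpace ℝ X] {Ψ G : X → ℝ} {K : Set X}
  {u d : X} {α : ℝ}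

theorem clarkeDeriv_smul_of_pos (Ψ : X → ℝ) (u d : X) {c : ℝ} (hc : 0 < c) :
    clarkeDeriv Ψ u (c • d) = c * clarkeDeriv Ψ u d := by
  have hmap : map (Prod.map id (c * ·)) (𝓝 u ×ˢ 𝓝[>] (0 : ℝ)) = 𝓝 u ×ˢ 𝓝[>] 0 := by
    rw [← prod_map_map_eq', map_id]
    nth_rewrite 1 [← comap_mulLeft_nhdsGT_zero hc]
    rw [map_comap_of_surjective (mul_left_surjective₀ hc.ne')]
  have hquot (p : X × ℝ) : (Ψ (p.1 + p.2 • c • d) - Ψ p.1) / p.2 =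
      c * ((Ψ (p.1 + (c * p.2) • d) - Ψ p.1) / (c * p.2)) := by
    rw [smul_smul, mul_comm p.2 c, ← mul_div_assoc, mul_div_mul_left _ _ hc.ne']
  simp only [clarkeDeriv, hquot]
  rw [limsup_const_mul_of_pos _ _ hc]
  nth_rewrite 2 [← hmap]
  rfl

theorem IsLipschitzNear.isBoundedUnder_quotient (hΨ : IsLipschitzNear Ψ u) (d : X) :
    IsBoundedUnder (· ≤ ·) (𝓝 u ×ˢ 𝓝[>] (0 : ℝ))
      (fun p : X × ℝ => (Ψ (p.1 + p.2 • d) - Ψ p.1) / p.2) := by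
  obtain ⟨L, s, hs, hL⟩ := hΨ
  have hbase : Tendsto (fun p : X × ℝ => p.1) (𝓝 u ×ˢ 𝓝[>] (0 : ℝ)) (𝓝 u) := tendsto_fst
  have hstep : Tendsto (fun p : X × ℝ => p.2) (𝓝 u ×ˢ 𝓝[>] (0 : ℝ)) (𝓝[>] 0) := tendsto_snd
  have hend : Tendsto (fun p : X × ℝ => p.1 + p.2 • d) (𝓝 u ×ˢ 𝓝[>] (0 : ℝ)) (𝓝 u) := by
    simpa using hbase.add ((hstep.mono_right nhdsWithin_le_nhds).smul_const d)
  refine isBoundedUnder_of_eventually_le (a := L * ‖d‖) ?_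
  filter_upwards [hbase hs, hend hs, hstep self_mem_nhdsWithin] with p hp hpd hpos
  rw [Set.mem_preimage, Set.mem_Ioi] at hpos
  rw [div_le_iff₀ hpos]
  calc Ψ (p.1 + p.2 • d) - Ψ p.1 ≤ ‖Ψ (p.1 + p.2 • d) - Ψ p.1‖ := Real.le_norm_self _
    _ ≤ L * ‖p.1 + p.2 • d - p.1‖ := hL.norm_sub_le hpd hp
    _ = L * ‖d‖ * p.2 := by
      rw [add_sub_cancel_left, norm_smul, Real.norm_of_nonneg hpos.le]
      ring

theorem IsLipschitzNear.eventually_quotient_lt (hΨ : IsLipschitzNear Ψ u) {r : ℝ}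
    (hr : clarkeDeriv Ψ u d < r) : ∀ᶠ t : ℝ in 𝓝[>] 0, (Ψ (u + t • d) - Ψ u) / t < r := by
  have hray : Tendsto (fun t : ℝ => (u, t)) (𝓝[>] 0) (𝓝 u ×ˢ 𝓝[>] 0) :=
    tendsto_const_nhds.prodMk tendsto_id
  exact hray.eventually (eventually_lt_of_limsup_lt hr (hΨ.isBoundedUnder_quotient d))

theorem IsLipschitzNear.eventually_slope_lt {x : X} {s r : ℝ}
    (hΨ : IsLipschitzNear Ψ (x + s • d)) (hr : clarkeDeriv Ψ (x + s • d) d < r) :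
    ∀ᶠ z in 𝓝[>] s, slope (fun t : ℝ => Ψ (x + t • d)) s z < r := by
  have hshift : Tendsto (fun z => z - s) (𝓝[>] s) (𝓝[>] 0) :=
    (map_subRight_nhdsGT.trans (by rw [sub_self])).le
  filter_upwards [hshift.eventually (hΨ.eventually_quotient_lt hr)] with z hz
  have hpoint : x + s • d + (z - s) • d = x + z • d := by module
  rwa [hpoint, ← slope_def_field (fun t : ℝ => Ψ (x + t • d))] at hz

theorem exists_deriv_lt_clarkeDeriv {x : X} {c : ℝ} {B B' : ℝ → ℝ} (hc : 0 ≤ c)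
    (hΨ : ∀ s ∈ Set.Icc 0 c, IsLipschitzNear Ψ (x + s • d))
    (hB : ∀ s, HasDerivAt B (B' s) s) (hlt : B c - B 0 < Ψ (x + c • d) - Ψ x) :
    ∃ s ∈ Set.Ico 0 c, B' s < clarkeDeriv Ψ (x + s • d) d := by
  by_contra! hle
  have hcont : ContinuousOn (fun t : ℝ => Ψ (x + t • d)) (Set.Icc 0 c) := fun s hs =>
    (ContinuousAt.comp (f := fun t : ℝ => x + t • d) (hΨ s hs).continuousAt
      (by fun_prop)).continuousWithinAt
  have hbound := image_le_of_liminf_slope_right_le_deriv_boundary hcont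
    (B := fun t => Ψ x + (B t - B 0)) (B' := B') (by simp)
    (fun s _ => (((hB s).sub_const _).const_add _).continuousAt.continuousWithinAt)
    (fun s _ => (((hB s).sub_const _).const_add _).hasDerivWithinAt)
    (fun s hs r hr =>
      ((hΨ s (Set.Ico_subset_Icc_self hs)).eventually_slope_lt
        ((hle s hs).trans_lt hr)).frequently)
    (Set.right_mem_Icc.2 hc)
  linarith

theorem ClarkeRelaxedMonotoneOn.clarkeDeriv_add_le (hΨ : ClarkeRelaxedMonotoneOn K Ψ α) {c : ℝ}
    (hc : 0 < c) (hu : u ∈ K) (hv : u + c • d ∈ K) :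
    clarkeDeriv Ψ u d + clarkeDeriv Ψ (u + c • d) (-d) ≤ α * ‖d‖ ^ 2 * c := by
  refine le_of_mul_le_mul_left ?_ hc
  calc c * (clarkeDeriv Ψ u d + clarkeDeriv Ψ (u + c • d) (-d))
      = clarkeDeriv Ψ u (u + c • d - u) + clarkeDeriv Ψ (u + c • d) (u - (u + c • d)) := by
        rw [add_sub_cancel_left, sub_add_cancel_left, ← smul_neg, clarkeDeriv_smul_of_pos _ _ _ hc,
          clarkeDeriv_smul_of_pos _ _ _ hc, mul_add]
    _ ≤ α * ‖u - (u + c • d)‖ ^ 2 := hΨ _ hu _ hv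
    _ = c * (α * ‖d‖ ^ 2 * c) := by
        rw [sub_add_cancel_left, norm_neg, norm_smul, Real.norm_of_nonneg hc.le]
        ring

-- If the convexity inequality failed at `a • x + b • y`, the mean value inequality, applied from
-- `x` and from `y` towards that point, would give two points violating relaxed monotonicity.
theorem ClarkeRelaxedMonotoneOn.strongConvexOn_neg (hΨ : ClarkeRelaxedMonotoneOn K Ψ α)
    (hK : Convex ℝ K) (hlip : ∀ u ∈ K, IsLipschitzNear Ψ u) : StrongConvexOn K (-α) Ψ := by
  refine ⟨hK, fun x hx y hy a b ha hb hab => ?_⟩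
  obtain rfl : a = 1 - b := by linarith
  by_contra! hlt
  obtain ⟨d, rfl⟩ : ∃ d, y = x + d := ⟨y - x, (add_sub_cancel x y).symm⟩
  have hpoint : (1 - b) • x + b • (x + d) = x + b • d := by module
  have hpoint' : x + b • d = x + d + (1 - b) • -d := by module
  rw [hpoint, sub_add_cancel_left, norm_neg, smul_eq_mul, smul_eq_mul] at hlt
  have hxK {s : ℝ} (hs₀ : 0 ≤ s) (hs₁ : s ≤ 1) : x + s • d ∈ K :=
    hK.add_smul_mem hx hy ⟨hs₀, hs₁⟩
  have hreverse (t : ℝ) : x + d + t • -d = x + (1 - t) • d := by module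
  set β := α * ‖d‖ ^ 2
  set r := Ψ (x + d) - Ψ x + β / 2
  have hB (p t : ℝ) : HasDerivAt (fun t => p * t - β / 2 * t ^ 2) (p - β * t) t :=
    (((hasDerivAt_id t).const_mul p).sub ((hasDerivAt_pow 2 t).const_mul (β / 2))).congr_deriv
      (by push_cast; ring)
  obtain ⟨s, ⟨hs₀, hsb⟩, hs⟩ := exists_deriv_lt_clarkeDeriv hb
    (fun s hs => hlip _ (hxK hs.1 (by linarith [hs.2]))) (hB r) (by linear_combination hlt)
  obtain ⟨t, ⟨ht₀, hta⟩, ht⟩ := exists_deriv_lt_clarkeDeriv (x := x + d) (d := -d) ha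
    (fun t ht => hreverse t ▸ hlip _ (hxK (by linarith [ht.2]) (by linarith [ht.1])))
    (hB (β - r)) (by rw [← hpoint']; linear_combination hlt)
  have hst : x + s • d + (1 - t - s) • d = x + d + t • -d := by module
  have hmon := hΨ.clarkeDeriv_add_le (c := 1 - t - s) (by linarith)
    (hxK hs₀ (by linarith)) (hst ▸ hreverse t ▸ hxK (by linarith) (by linarith))
  rw [hst] at hmon
  linarith

theorem IsLipschitzNear.add_clarkeDeriv_nonneg_of_isMinOn (hΨ : IsLipschitzNear Ψ u) {b c : ℝ}
    (hmin : IsMinOn (fun v => Ψ v + G v) K u) (hd : ∀ t ∈ Set.Ioc (0 : ℝ) 1, u + t • d ∈ K)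
    (hG : ∀ t ∈ Set.Ioc (0 : ℝ) 1, G (u + t • d) ≤ G u + t * c + t ^ 2 * b) :
    0 ≤ c + clarkeDeriv Ψ u d := by
  suffices -c ≤ clarkeDeriv Ψ u d by linarith
  refine le_of_forall_gt_imp_ge_of_dense fun r hr => ?_
  have hlim : Tendsto (fun t : ℝ => t * b + r) (𝓝[>] 0) (𝓝 r) := by
    have h : Tendsto (fun t : ℝ => t * b + r) (𝓝 0) (𝓝 (0 * b + r)) :=
      Continuous.tendsto (by fun_prop) 0
    simpa using h.mono_left nhdsWithin_le_nhds
  refine ge_of_tendsto hlim ?_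
  filter_upwards [hΨ.eventually_quotient_lt hr, Ioc_mem_nhdsGT one_pos] with t hquot ht
  have hΨt : Ψ (u + t • d) - Ψ u < r * t := (div_lt_iff₀ ht.1).1 hquot
  have hmint : Ψ u + G u ≤ Ψ (u + t • d) + G (u + t • d) := hmin (hd t ht)
  refine le_of_mul_le_mul_left ?_ ht.1
  linear_combination hmint + hΨt + hG t ht

end ClarkeDerivative

section Minimization

variable {E : Type*} [NormedAddCommGroup E] [NormedSpace ℝ E] {J : E → ℝ} {K : Set E} {m : ℝ}

theorem le_of_strongConvexOn_of_ball_le (hJ : StrongConvexOn K m J) {x v : E} {b δ : ℝ}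
    (hx : x ∈ K) (hv : v ∈ K) (hδ : 0 < δ) (hδv : δ ≤ ‖x - v‖)
    (hball : ∀ z ∈ K, ‖z - x‖ ≤ δ → b ≤ J z) :
    J x + (b - J x) * (‖x - v‖ / δ) + m / 2 * (‖x - v‖ * (‖x - v‖ - δ)) ≤ J v := by
  set R := ‖x - v‖ with hR
  have hRpos : 0 < R := hδ.trans_le hδv
  have ht₀ : 0 < δ / R := by positivity
  have ht₁ : 0 ≤ 1 - δ / R := sub_nonneg.2 ((div_le_one hRpos).2 hδv)
  have hdist : ‖(1 - δ / R) • x + (δ / R) • v - x‖ = δ := by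
    have hdiff : (1 - δ / R) • x + (δ / R) • v - x = (δ / R) • (v - x) := by module
    rw [hdiff, norm_smul, norm_sub_rev, ← hR, Real.norm_of_nonneg ht₀.le,
      div_mul_cancel₀ _ hRpos.ne']
  have hlower := hball _ (hJ.1 hx hv ht₁ ht₀.le (by ring)) hdist.le
  have hupper := hJ.2 hx hv ht₁ ht₀.le (by ring)
  rw [smul_eq_mul, smul_eq_mul, ← hR] at hupper
  refine le_of_mul_le_mul_left ?_ ht₀
  have hnormalize : δ / R * (J x + (b - J x) * (R / δ) + m / 2 * (R * (R - δ))) =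
      b - (1 - δ / R) * J x + (1 - δ / R) * (δ / R) * (m / 2 * R ^ 2) := by
    field_simp
    ring
  linarith

theorem bddBelow_image_of_strongConvexOn (hJ : StrongConvexOn K m J) (hm : 0 < m) {x : E}
    (hx : x ∈ K) (hlsc : LowerSemicontinuousWithinAt J K x) : BddBelow (J '' K) := by
  obtain ⟨ε, hε, hball⟩ := Metric.mem_nhdsWithin_iff.1 (hlsc (J x - 1) (by linarith))
  have hδ : 0 < ε / 2 := half_pos hε
  have hnear (z : E) (hz : z ∈ K) (hzx : ‖z - x‖ ≤ ε / 2) : J x - 1 ≤ J z :=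
    le_of_lt (hball ⟨by rw [Metric.mem_ball, dist_eq_norm]; linarith, hz⟩)
  set δ := ε / 2
  set β := 1 / δ + m * δ / 2 with hβ
  refine ⟨J x - 1 - β ^ 2 / (2 * m), ?_⟩
  rintro _ ⟨v, hv, rfl⟩
  have hβm : 0 ≤ β ^ 2 / (2 * m) := by positivity
  rcases le_or_gt δ ‖x - v‖ with hfar | hclose
  · have hgrowth := le_of_strongConvexOn_of_ball_le hJ hx hv hδ hfar hnear
    have hsquare : J x + (J x - 1 - J x) * (‖x - v‖ / δ) + m / 2 * (‖x - v‖ * (‖x - v‖ - δ)) =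
        J x + (m * ‖x - v‖ - β) ^ 2 / (2 * m) - β ^ 2 / (2 * m) := by
      rw [hβ]
      field_simp
      ring
    have hnonneg : 0 ≤ (m * ‖x - v‖ - β) ^ 2 / (2 * m) := by positivity
    linarith
  · linarith [hnear v hv (norm_sub_rev x v ▸ hclose.le)]

theorem sq_norm_sub_le_of_strongConvexOn (hJ : StrongConvexOn K m J) {I : ℝ}
    (hI : ∀ v ∈ K, I ≤ J v) {x y : E} (hx : x ∈ K) (hy : y ∈ K) :
    m * ‖x - y‖ ^ 2 ≤ 4 * (J x - I + (J y - I)) := by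
  have hhalf : (0 : ℝ) ≤ 1 / 2 := by norm_num
  have hmid := hJ.2 hx hy hhalf hhalf (by norm_num)
  have hImid := hI _ (hJ.1 hx hy hhalf hhalf (by norm_num))
  rw [smul_eq_mul, smul_eq_mul] at hmid
  linarith

theorem cauchySeq_of_strongConvexOn (hJ : StrongConvexOn K m J) (hm : 0 < m) {I : ℝ}
    (hI : ∀ v ∈ K, I ≤ J v) {x : ℕ → E} (hxK : ∀ n, x n ∈ K)
    (hx : Tendsto (fun n => J (x n)) atTop (𝓝 I)) : CauchySeq x := by
  have hgap : Tendsto (fun n => J (x n) - I) atTop (𝓝 0) := by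
    simpa using hx.sub_const I
  have hbound : Tendsto (fun p : ℕ × ℕ => √(4 * (J (x p.1) - I + (J (x p.2) - I)) / m))
      atTop (𝓝 0) := by
    rw [← prod_atTop_atTop_eq]
    simpa using ((((hgap.comp tendsto_fst).add (hgap.comp tendsto_snd)).const_mul 4).div_const
      m).sqrt
  refine cauchySeq_iff_tendsto_dist_atTop_0.2
    (squeeze_zero (fun _ => dist_nonneg) (fun p => ?_) hbound)
  rw [dist_eq_norm]
  refine Real.le_sqrt_of_sq_le ((le_div_iff₀' hm).2 ?_)
  exact sq_norm_sub_le_of_strongConvexOn hJ hI (hxK p.1) (hxK p.2)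

theorem exists_isMinOn_of_strongConvexOn (hJ : StrongConvexOn K m J) (hm : 0 < m)
    (hlsc : LowerSemicontinuousOn J K) (hne : K.Nonempty) (hK : IsComplete K) :
    ∃ u ∈ K, IsMinOn J K u := by
  have hbdd : BddBelow (J '' K) :=
    bddBelow_image_of_strongConvexOn hJ hm hne.some_mem (hlsc _ hne.some_mem)
  have hinf : ∀ v ∈ K, sInf (J '' K) ≤ J v := fun v hv => csInf_le hbdd ⟨v, hv, rfl⟩
  obtain ⟨j, -, hj, hjK⟩ := exists_seq_tendsto_sInf (hne.image J) hbdd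
  choose x hxK hxj using hjK
  obtain rfl : (fun n => J (x n)) = j := funext hxj
  obtain ⟨u, hu, hxu⟩ := cauchySeq_tendsto_of_isComplete hK hxK
    (cauchySeq_of_strongConvexOn hJ hm hinf hxK hj)
  have hxu' : Tendsto x atTop (𝓝[K] u) :=
    tendsto_nhdsWithin_iff.2 ⟨hxu, Eventually.of_forall hxK⟩
  have hJu : J u ≤ sInf (J '' K) := le_of_forall_lt_imp_le_of_dense fun r hr =>
    ge_of_tendsto hj ((hxu'.eventually (hlsc u hu r hr)).mono fun _ => le_of_lt)
  exact ⟨u, hu, fun v hv => hJu.trans (hinf v hv)⟩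

end Minimization

section RegularizedProblem

variable {V : Type*} [NormedAddCommGroup V] [InnerProductSpace ℝ V] {K : Set V} {Φ Ψ : V → ℝ}
  {A : V → (V →L[ℝ] ℝ)} {α θ L m : ℝ}

/-- `u` solves on `K` the variational-hemivariational inequality for `Φ` and `Ψ`, scaled by `θ` and
regularized by the inner product, with datum `g`. The auxiliary problem of the fixed point iteration
at `w` has the datum `fixedPointDatum A f θ w`. -/
def IsRegularizedSolution (K : Set V) (Φ Ψ : V → ℝ) (θ : ℝ) (g : V →L[ℝ] ℝ) (u : V) : Prop :=
  u ∈ K ∧ ∀ v ∈ K, g (v - u) ≤ ⟪u, v - u⟫ + θ * (Φ v - Φ u + clarkeDeriv Ψ u (v - u))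

/-- The datum `⟪w, ·⟫ - θ (A w - f)` of the auxiliary problem at `w`. -/
noncomputable def fixedPointDatum (A : V → (V →L[ℝ] ℝ)) (f : V →L[ℝ] ℝ) (θ : ℝ) (w : V) :
    V →L[ℝ] ℝ :=
  innerSL ℝ w - θ • (A w - f)

theorem strongConvexOn_add_regularization (hΦ : ConvexOn ℝ K Φ) (μ : ℝ) (g : V →L[ℝ] ℝ) :
    StrongConvexOn K μ (fun v => Φ v + μ * (‖v‖ ^ 2 / 2 - g v)) := by
  rw [strongConvexOn_iff_convex]
  refine (hΦ.add ((-(μ • g)).toLinearMap.convexOn hΦ.1)).congr fun v _ => ?_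
  simp only [Pi.add_apply, ContinuousLinearMap.coe_coe, neg_apply, smul_apply, smul_eq_mul]
  ring

theorem exists_isMinOn_add_regularization (hne : K.Nonempty) (hK : IsComplete K)
    (hΦ : ConvexOn ℝ K Φ) (hlsc : LowerSemicontinuousOn Φ K)
    (hlip : ∀ u ∈ K, IsLipschitzNear Ψ u) (hΨ : ClarkeRelaxedMonotoneOn K Ψ α) {μ : ℝ}
    (hμ : α < μ) (g : V →L[ℝ] ℝ) :
    ∃ u ∈ K, IsMinOn (fun v => Ψ v + (Φ v + μ * (‖v‖ ^ 2 / 2 - g v))) K u := by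
  have hstrong : StrongConvexOn K (μ - α) (fun v => Ψ v + (Φ v + μ * (‖v‖ ^ 2 / 2 - g v))) := by
    convert UniformConvexOn.add (hΨ.strongConvexOn_neg hΦ.1 hlip)
      (strongConvexOn_add_regularization hΦ μ g) using 1
    unfold StrongConvexOn
    congr! 1
    ext r
    simp only [Pi.add_apply]
    ring
  have hΨcont : ContinuousOn Ψ K := fun u hu => (hlip u hu).continuousAt.continuousWithinAt
  have hreg : Continuous fun v => μ * (‖v‖ ^ 2 / 2 - g v) := by fun_prop
  exact exists_isMinOn_of_strongConvexOn hstrong (sub_pos.2 hμ)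
    (hΨcont.lowerSemicontinuousOn.add (hlsc.add hreg.continuousOn.lowerSemicontinuousOn)) hne hK

theorem add_regularization_segment_le (hΦ : ConvexOn ℝ K Φ) {u v : V} (hu : u ∈ K) (hv : v ∈ K)
    (μ : ℝ) (g : V →L[ℝ] ℝ) {t : ℝ} (ht₀ : 0 ≤ t) (ht₁ : t ≤ 1) :
    Φ (u + t • (v - u)) + μ * (‖u + t • (v - u)‖ ^ 2 / 2 - g (u + t • (v - u))) ≤
      Φ u + μ * (‖u‖ ^ 2 / 2 - g u) + t * (Φ v - Φ u + μ * (⟪u, v - u⟫ - g (v - u))) +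
        t ^ 2 * (μ * ‖v - u‖ ^ 2 / 2) := by
  have hpoint : (1 - t) • u + t • v = u + t • (v - u) := by module
  have hΦt := hΦ.2 hu hv (sub_nonneg.2 ht₁) ht₀ (by ring)
  rw [hpoint, smul_eq_mul, smul_eq_mul] at hΦt
  rw [norm_add_sq_real, norm_smul, real_inner_smul_right, mul_pow, Real.norm_eq_abs, sq_abs,
    map_add, map_smul, smul_eq_mul]
  linear_combination hΦt

theorem exists_isRegularizedSolution (hne : K.Nonempty) (hK : IsComplete K)
    (hΦ : ConvexOn ℝ K Φ) (hlsc : LowerSemicontinuousOn Φ K)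
    (hlip : ∀ u ∈ K, IsLipschitzNear Ψ u) (hΨ : ClarkeRelaxedMonotoneOn K Ψ α) (hθ : 0 < θ)
    (hθα : θ * α < 1) (g : V →L[ℝ] ℝ) : ∃ u, IsRegularizedSolution K Φ Ψ θ g u := by
  have hμ : α < θ⁻¹ := by rwa [← one_div, lt_div_iff₀' hθ]
  obtain ⟨u, hu, hmin⟩ := exists_isMinOn_add_regularization hne hK hΦ hlsc hlip hΨ hμ g
  refine ⟨u, hu, fun v hv => ?_⟩
  have hopt := (hlip u hu).add_clarkeDeriv_nonneg_of_isMinOn hmin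
    (fun t ht => hΦ.1.add_smul_sub_mem hu hv (Set.Ioc_subset_Icc_self ht))
    (fun t ht => add_regularization_segment_le hΦ hu hv θ⁻¹ g ht.1.le ht.2)
  have hscaled := mul_nonneg hθ.le hopt
  have hcancel : θ * θ⁻¹ = 1 := mul_inv_cancel₀ hθ.ne'
  linear_combination hscaled + (⟪u, v - u⟫ - g (v - u)) * hcancel

theorem IsRegularizedSolution.mul_norm_sub_le (hΨ : ClarkeRelaxedMonotoneOn K Ψ α) (hθ : 0 ≤ θ)
    {g₁ g₂ : V →L[ℝ] ℝ} {u₁ u₂ : V} (h₁ : IsRegularizedSolution K Φ Ψ θ g₁ u₁)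
    (h₂ : IsRegularizedSolution K Φ Ψ θ g₂ u₂) :
    (1 - θ * α) * ‖u₁ - u₂‖ ≤ ‖g₁ - g₂‖ := by
  have hsq : (1 - θ * α) * ‖u₁ - u₂‖ ^ 2 ≤ (g₁ - g₂) (u₁ - u₂) := by
    have hineq₁ := h₁.2 u₂ h₂.1
    have hineq₂ := h₂.2 u₁ h₁.1
    have hmon := mul_le_mul_of_nonneg_left (hΨ u₁ h₁.1 u₂ h₂.1) hθ
    rw [← real_inner_self_eq_norm_sq] at hmon ⊢
    simp only [inner_sub_left, inner_sub_right, sub_apply, map_sub] at hineq₁ hineq₂ hmon ⊢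
    linear_combination hineq₁ + hineq₂ + hmon
  rcases (norm_nonneg (u₁ - u₂)).eq_or_lt with hzero | hpos
  · rw [← hzero, mul_zero]
    exact norm_nonneg _
  · refine le_of_mul_le_mul_right ?_ hpos
    calc (1 - θ * α) * ‖u₁ - u₂‖ * ‖u₁ - u₂‖ = (1 - θ * α) * ‖u₁ - u₂‖ ^ 2 := by ring
      _ ≤ (g₁ - g₂) (u₁ - u₂) := hsq
      _ ≤ ‖g₁ - g₂‖ * ‖u₁ - u₂‖ := (Real.le_norm_self _).trans ((g₁ - g₂).le_opNorm _)

theorem IsRegularizedSolution.eq (hΨ : ClarkeRelaxedMonotoneOn K Ψ α) (hθ : 0 ≤ θ)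
    (hθα : θ * α < 1) {g : V →L[ℝ] ℝ} {u₁ u₂ : V} (h₁ : IsRegularizedSolution K Φ Ψ θ g u₁)
    (h₂ : IsRegularizedSolution K Φ Ψ θ g u₂) : u₁ = u₂ := by
  have hle := h₁.mul_norm_sub_le hΨ hθ h₂
  rw [sub_self, norm_zero] at hle
  exact sub_eq_zero.1 (norm_le_zero_iff.1 (nonpos_of_mul_nonpos_right hle (sub_pos.2 hθα)))

-- In a Hilbert space this is the expansion of the square under the Riesz isometry. Without
-- completeness, test `b` on `(⟪w, d⟫ + b d) • d - w` for a unit vector `d`.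
theorem norm_innerSL_add_sq_le (w : V) (b : V →L[ℝ] ℝ) :
    ‖innerSL ℝ w + b‖ ^ 2 ≤ ‖w‖ ^ 2 + 2 * b w + ‖b‖ ^ 2 := by
  have hunit (d : V) (hd : ‖d‖ = 1) :
      (⟪w, d⟫ + b d) ^ 2 ≤ ‖w‖ ^ 2 + 2 * b w + ‖b‖ ^ 2 := by
    set p := ⟪w, d⟫ + b d with hp
    have htest : b (p • d - w) ≤ ‖b‖ * ‖p • d - w‖ :=
      (Real.le_norm_self _).trans (b.le_opNorm _)
    have hnorm : ‖p • d - w‖ ^ 2 = p ^ 2 - 2 * (p * ⟪w, d⟫) + ‖w‖ ^ 2 := by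
      rw [norm_sub_sq_real, norm_smul, hd, mul_one, Real.norm_eq_abs, sq_abs,
        real_inner_smul_left, real_inner_comm]
    rw [map_sub, map_smul, smul_eq_mul] at htest
    have hyoung := two_mul_le_add_sq ‖b‖ ‖p • d - w‖
    linear_combination 2 * htest + hyoung + hnorm + 2 * p * hp
  have hnonneg : 0 ≤ ‖w‖ ^ 2 + 2 * b w + ‖b‖ ^ 2 := by
    have hbw : -(b w) ≤ ‖b‖ * ‖w‖ := (neg_le_abs _).trans (b.le_opNorm w)
    linarith [sq_nonneg (‖w‖ - ‖b‖)]
  refine (Real.le_sqrt (norm_nonneg _) hnonneg).1 ?_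
  exact ContinuousLinearMap.opNorm_le_of_unit_norm (Real.sqrt_nonneg _)
    fun d hd => Real.abs_le_sqrt (hunit d hd)

theorem norm_fixedPointDatum_sub_le (f : V →L[ℝ] ℝ) (hθ : 0 ≤ θ) {w₁ w₂ : V}
    (hlip : ‖A w₁ - A w₂‖ ≤ L * ‖w₁ - w₂‖)
    (hmon : m * ‖w₁ - w₂‖ ^ 2 ≤ (A w₁ - A w₂) (w₁ - w₂)) :
    ‖fixedPointDatum A f θ w₁ - fixedPointDatum A f θ w₂‖ ≤
      √(1 - 2 * θ * m + θ ^ 2 * L ^ 2) * ‖w₁ - w₂‖ := by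
  have hsplit : fixedPointDatum A f θ w₁ - fixedPointDatum A f θ w₂ =
      innerSL ℝ (w₁ - w₂) + -(θ • (A w₁ - A w₂)) := by
    rw [fixedPointDatum, fixedPointDatum, map_sub]
    module
  have hnorm := norm_innerSL_add_sq_le (w₁ - w₂) (-(θ • (A w₁ - A w₂)))
  rw [norm_neg, norm_smul, Real.norm_of_nonneg hθ, neg_apply, smul_apply, smul_eq_mul] at hnorm
  have hlip_sq := mul_le_mul_of_nonneg_left (pow_le_pow_left₀ (norm_nonneg _) hlip 2) (sq_nonneg θ)
  have hmon_scaled := mul_le_mul_of_nonneg_left hmon hθ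
  rw [hsplit, ← Real.sqrt_sq (norm_nonneg (w₁ - w₂)), ← Real.sqrt_mul' _ (sq_nonneg _)]
  refine Real.le_sqrt_of_sq_le ?_
  linear_combination hnorm + 2 * hmon_scaled + hlip_sq

end RegularizedProblem

theorem exists_forall_contraction_ratio_lt_one {α m : ℝ} (hαm : α < m) (L : ℝ) :
    ∃ θ₀ > (0 : ℝ), ∀ θ : ℝ, 0 < θ → θ < θ₀ →
      θ * α < 1 ∧ √(1 - 2 * θ * m + θ ^ 2 * L ^ 2) / (1 - θ * α) < 1 := by
  refine ⟨min (1 / (|α| + 1)) (2 * (m - α) / (L ^ 2 + 1)), lt_min (by positivity)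
    (div_pos (mul_pos two_pos (sub_pos.2 hαm)) (by positivity)), fun θ hθ hθ₀ => ?_⟩
  have hθ_abs : θ * (|α| + 1) < 1 :=
    (lt_div_iff₀ (by positivity)).1 (hθ₀.trans_le (min_le_left _ _))
  have hθL : θ * (L ^ 2 + 1) < 2 * (m - α) :=
    (lt_div_iff₀ (by positivity)).1 (hθ₀.trans_le (min_le_right _ _))
  have hθα : θ * α < 1 := by
    linarith [mul_le_mul_of_nonneg_left (le_abs_self α) hθ.le]
  refine ⟨hθα, ?_⟩
  rw [div_lt_one (sub_pos.2 hθα), Real.sqrt_lt' (sub_pos.2 hθα)]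
  linear_combination θ * hθL + sq_nonneg (θ * α) + sq_nonneg θ

theorem stmt8_general {V : Type*} [NormedAddCommGroup V] [InnerProductSpace ℝ V]
    {K : Set V} (hKne : K.Nonempty) (hKcomplete : IsComplete K)
    {A : V → (V →L[ℝ] ℝ)} {LA mA : ℝ}
    (hALip : ∀ v₁ ∈ K, ∀ v₂ ∈ K, ‖A v₁ - A v₂‖ ≤ LA * ‖v₁ - v₂‖)
    (hAmon : ∀ v₁ ∈ K, ∀ v₂ ∈ K, (A v₁ - A v₂) (v₁ - v₂) ≥ mA * ‖v₁ - v₂‖ ^ 2)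
    {Φ : V → ℝ} (hΦcv : ConvexOn ℝ K Φ) (hΦlsc : LowerSemicontinuousOn Φ K)
    {Ψ : V → ℝ} (hΨlip : ∀ u ∈ K, IsLipschitzNear Ψ u)
    {αΨ : ℝ} (hΨmon : ClarkeRelaxedMonotoneOn K Ψ αΨ)
    (f : V →L[ℝ] ℝ) (hsmall : αΨ < mA) :
    ∃ θ₀ > (0 : ℝ), ∀ θ : ℝ, 0 < θ → θ < θ₀ →
      ∃ T : V → V,
        (∀ w ∈ K, T w ∈ K ∧
          (∀ v ∈ K,
            ⟪T w, v - T w⟫ + θ * (Φ v - Φ (T w) + clarkeDeriv Ψ (T w) (v - T w)) ≥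
              ⟪w, v - T w⟫ - θ * ((A w) (v - T w) - f (v - T w))) ∧
          (∀ u' ∈ K,
            (∀ v ∈ K,
              ⟪u', v - u'⟫ + θ * (Φ v - Φ u' + clarkeDeriv Ψ u' (v - u')) ≥
                ⟪w, v - u'⟫ - θ * ((A w) (v - u') - f (v - u'))) → u' = T w)) ∧
        (∃ k : ℝ, 0 ≤ k ∧ k < 1 ∧
          ∀ w₁ ∈ K, ∀ w₂ ∈ K, ‖T w₁ - T w₂‖ ≤ k * ‖w₁ - w₂‖) := by
  obtain ⟨θ₀, hθ₀, hratio⟩ := exists_forall_contraction_ratio_lt_one hsmall LA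
  refine ⟨θ₀, hθ₀, fun θ hθ hθlt => ?_⟩
  obtain ⟨hθα, hk⟩ := hratio θ hθ hθlt
  have hpos : 0 < 1 - θ * αΨ := sub_pos.2 hθα
  choose T hT using fun w => exists_isRegularizedSolution hKne hKcomplete hΦcv hΦlsc hΨlip hΨmon
    hθ hθα (fixedPointDatum A f θ w)
  refine ⟨T, fun w _ => ⟨(hT w).1, (hT w).2, fun u' hu' h => ?_⟩, _,
    div_nonneg (Real.sqrt_nonneg _) hpos.le, hk, fun w₁ hw₁ w₂ hw₂ => ?_⟩
  · exact IsRegularizedSolution.eq hΨmon hθ.le hθα ⟨hu', h⟩ (hT w)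
  · rw [div_mul_eq_mul_div, le_div_iff₀' hpos]
    exact ((hT w₁).mul_norm_sub_le hΨmon hθ.le (hT w₂)).trans
      (norm_fixedPointDatum_sub_le f hθ.le (hALip w₁ hw₁ w₂ hw₂) (hAmon w₁ hw₁ w₂ hw₂))

theorem stmt8 {V : Type*} [NormedAddCommGroup V] [InnerProductSpace ℝ V] [CompleteSpace V]
    (K : Set V) (hKne : K.Nonempty) (hKcl : IsClosed K) (hKcv : Convex ℝ K)
    (A : V → (V →L[ℝ] ℝ)) (LA : ℝ) (hLA : 0 < LA)
    (hALip : ∀ v₁ v₂ : V, ‖A v₁ - A v₂‖ ≤ LA * ‖v₁ - v₂‖)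
    (mA : ℝ) (hmA : 0 < mA)
    (hAmon : ∀ v₁ v₂ : V, (A v₁ - A v₂) (v₁ - v₂) ≥ mA * ‖v₁ - v₂‖ ^ 2)
    (Φ : V → ℝ) (hΦcv : ConvexOn ℝ Set.univ Φ) (hΦcont : Continuous Φ)
    (Ψ : V → ℝ)
    (hΨlip : ∀ u : V, ∃ (L : NNReal) (s : Set V), s ∈ 𝓝 u ∧ LipschitzOnWith L Ψ s)
    (αΨ : ℝ) (hαΨ : 0 ≤ αΨ)
    (hΨmon : ∀ v₁ v₂ : V,
      clarkeDeriv Ψ v₁ (v₂ - v₁) + clarkeDeriv Ψ v₂ (v₁ - v₂) ≤ αΨ * ‖v₁ - v₂‖ ^ 2)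
    (f : V →L[ℝ] ℝ) (hsmall : αΨ < mA) :
    ∃ θ₀ > (0:ℝ), ∀ θ : ℝ, 0 < θ → θ < θ₀ →
      ∃ T : V → V,
        (∀ w ∈ K, T w ∈ K ∧
          (∀ v ∈ K,
            ⟪T w, v - T w⟫ + θ * (Φ v - Φ (T w) + clarkeDeriv Ψ (T w) (v - T w)) ≥
              ⟪w, v - T w⟫ - θ * ((A w) (v - T w) - f (v - T w))) ∧
          (∀ u' ∈ K,
            (∀ v ∈ K,
              ⟪u', v - u'⟫ + θ * (Φ v - Φ u' + clarkeDeriv Ψ u' (v - u')) ≥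
                ⟪w, v - u'⟫ - θ * ((A w) (v - u') - f (v - u'))) → u' = T w)) ∧
        (∃ k : ℝ, 0 ≤ k ∧ k < 1 ∧
          ∀ w₁ ∈ K, ∀ w₂ ∈ K, ‖T w₁ - T w₂‖ ≤ k * ‖w₁ - w₂‖) := by
  exact stmt8_general hKne hKcl.isComplete (fun v₁ _ v₂ _ => hALip v₁ v₂)
    (fun v₁ _ v₂ _ => hAmon v₁ v₂) (hΦcv.subset (Set.subset_univ K) hKcv)
    hΦcont.continuousOn.lowerSemicontinuousOn (fun u _ => hΨlip u)
    (fun v₁ _ v₂ _ => hΨmon v₁ v₂) f hsmall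
end
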